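/- Let Φ̊ ⊂ ℝⁿ be the root system of type B_n (n ≥ 2), let (Λ_α) be an extension datum of type (Φ̊, Y) with common values Λ_s on short and Λ_ℓ on long roots, assume Λ_ℓ is an additive subgroup of Y (automatic for n ≥ 3), and let Φ^re be the associated set of real roots. Then Ψ ⊆ Φ^re is a maximal closed subroot system whose gradient Gr(Ψ) is a semi-closed subroot system of Φ̊ if and only if there exist a proper nonempty subset J ⊆ {1, …, n} and nonempty disjoint subsets Z₁, Z₂ ⊆ Λ_s, each a union of cosets of Λ_ℓ, with Λ_s = Z₁ ∪ Z₂, such that Ψ = {±εᵢ ⊕ z : i ∉ J, z ∈ Z₁} ∪ {±εⱼ ⊕ z : j ∈ J, z ∈ Z₂} ∪ {(±ε_p ± ε_q) ⊕ y : p ≠ q, y ∈ Λ_ℓ, and either p, q ∉ J or p, q ∈ J}. -/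

import Mathlib

open scoped RealInnerProductSpace Pointwise

noncomputable section

namespace BdS

variable {V Y : Type*} [NormedAddCommGroup V] [InnerProductSpace ℝ V]
variable [AddCommGroup Y] [Module ℝ Y]

/-- `pairing β α = (β, α∨) = 2(β,α)/(α,α)`. -/
def pairing (β α : V) : ℝ := 2 * ⟪β, α⟫ / ⟪α, α⟫

/-- `reflRoot α v = s_α(v) = v − (v, α∨)α`. -/
def reflRoot (α v : V) : V := v - pairing v α • α

/-- A (finite) root system in `V`. -/
def IsRootSystem (Φ : Set V) : Prop :=
  Φ.Finite ∧ (0 : V) ∉ Φ ∧ Submodule.span ℝ Φ = ⊤ ∧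
    (∀ α ∈ Φ, ∀ β ∈ Φ, reflRoot α β ∈ Φ) ∧
    ∀ α ∈ Φ, ∀ β ∈ Φ, ∃ m : ℤ, pairing β α = (m : ℝ)

def IsReduced (Φ : Set V) : Prop :=
  ∀ α ∈ Φ, ∀ c : ℝ, c • α ∈ Φ → c • α = α ∨ c • α = -α

def IsIrreducible (Φ : Set V) : Prop :=
  ∀ Φ₁ Φ₂ : Set V, Φ = Φ₁ ∪ Φ₂ → (∀ x ∈ Φ₁, ∀ y ∈ Φ₂, ⟪x, y⟫ = 0) →
    Φ₁ = ∅ ∨ Φ₂ = ∅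

/-- divisible roots -/
def divSet (Φ : Set V) : Set V := {α ∈ Φ | (2:ℝ)⁻¹ • α ∈ Φ}
/-- non-divisible roots -/
def ndSet (Φ : Set V) : Set V := Φ \ divSet Φ
/-- short roots: non-divisible roots of non-maximal squared length -/
def shortSet (Φ : Set V) : Set V := {α ∈ ndSet Φ | ∃ β ∈ ndSet Φ, ⟪α, α⟫ < ⟪β, β⟫}
/-- long roots -/
def longSet (Φ : Set V) : Set V := ndSet Φ \ shortSet Φ

/-- An extension datum of type `(Φ, Y)`. -/
def IsExtensionDatum (Φ : Set V) (Λ : V → Set Y) : Prop :=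
  (∀ α ∈ Φ, ∀ β ∈ Φ, ∀ z ∈ Λ α, ∀ y ∈ Λ β, y - pairing β α • z ∈ Λ (reflRoot α β)) ∧
  (0 : Y) ∈ Λ 0 ∧
  (∀ α ∈ ndSet Φ, (0 : Y) ∈ Λ α) ∧
  (∀ α ∈ divSet Φ, (Λ α).Nonempty) ∧
  Submodule.span ℝ (⋃ α ∈ insert (0 : V) Φ, Λ α) = ⊤

/-- subroot system of a finite root system -/
def IsSubRS (Φ Δ : Set V) : Prop :=
  Δ.Nonempty ∧ Δ ⊆ Φ ∧ ∀ α ∈ Δ, ∀ β ∈ Δ, reflRoot α β ∈ Δ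

def IsClosedSubRS (Φ Δ : Set V) : Prop :=
  IsSubRS Φ Δ ∧ ∀ α ∈ Δ, ∀ β ∈ Δ, α + β ∈ Φ → α + β ∈ Δ

def IsMaxClosedSubRS (Φ Δ : Set V) : Prop :=
  IsClosedSubRS Φ Δ ∧ Δ ≠ Φ ∧
    ∀ Δ' : Set V, IsClosedSubRS Φ Δ' → Δ' ≠ Φ → Δ ⊆ Δ' → Δ' = Δ

/-- semi-closed subroot system, relative to given short/long/divisible parts -/
def IsSemiClosedSubRS (Φ Φs Φl Φd Δ : Set V) : Prop :=
  IsSubRS Φ Δ ∧ ¬ (∀ α ∈ Δ, ∀ β ∈ Δ, α + β ∈ Φ → α + β ∈ Δ) ∧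
    ∀ α ∈ Δ, ∀ β ∈ Δ, α + β ∈ Φ → α + β ∉ Δ →
      (α ∈ Φs ∧ β ∈ Φs ∧ α + β ∈ Φl ∪ Φd) ∨ (α ∈ Φl ∧ β ∈ Φl ∧ α + β ∈ Φd)

def IsMaxSemiClosedSubRS (Φ Φs Φl Φd Δ : Set V) : Prop :=
  IsSemiClosedSubRS Φ Φs Φl Φd Δ ∧
    ∀ Δ' : Set V, IsClosedSubRS Φ Δ' → Δ' ≠ Φ → ¬ Δ ⊂ Δ'

/-- the set of real roots attached to an extension datum -/
def PhiRe (Φ : Set V) (Λ : V → Set Y) : Set (V × Y) := {x | x.1 ∈ Φ ∧ x.2 ∈ Λ x.1}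

/-- affine reflection `s_{α ⊕ y}(β ⊕ z) = s_α(β) ⊕ (z − (β,α∨)y)` -/
def reflAff (a x : V × Y) : V × Y := (reflRoot a.1 x.1, x.2 - pairing x.1 a.1 • a.2)

/-- subroot system of a set of real roots `R` -/
def IsSubSys (R Ψ : Set (V × Y)) : Prop :=
  Ψ.Nonempty ∧ Ψ ⊆ R ∧ Ψ ≠ R ∧ ∀ a ∈ Ψ, ∀ x ∈ Ψ, reflAff a x ∈ Ψ

def IsClosedSubSys (R Ψ : Set (V × Y)) : Prop :=
  IsSubSys R Ψ ∧ ∀ x ∈ Ψ, ∀ y ∈ Ψ, x + y ∈ R → x + y ∈ Ψ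

def IsMaxClosedSubSys (R Ψ : Set (V × Y)) : Prop :=
  IsClosedSubSys R Ψ ∧ ∀ Ψ' : Set (V × Y), IsClosedSubSys R Ψ' → Ψ ⊆ Ψ' → Ψ' = Ψ

/-- gradient of a subroot system -/
def Gr (Ψ : Set (V × Y)) : Set V := {α | ∃ y : Y, (α, y) ∈ Ψ}

def Zset (Ψ : Set (V × Y)) (α : V) : Set Y := {y | (α, y) ∈ Ψ}

abbrev E (n : ℕ) := EuclideanSpace ℝ (Fin n)

def eps {n : ℕ} (i : Fin n) : E n := EuclideanSpace.single i 1

def shortBC (n : ℕ) : Set (E n) := {v | ∃ i : Fin n, v = eps i ∨ v = -eps i}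

def longBC (n : ℕ) : Set (E n) :=
  {v | ∃ i j : Fin n, i ≠ j ∧ ∃ c d : ℝ, (c = 1 ∨ c = -1) ∧ (d = 1 ∨ d = -1) ∧
    v = c • eps i + d • eps j}

def divBC (n : ℕ) : Set (E n) :=
  {v | ∃ i : Fin n, v = (2:ℝ) • eps i ∨ v = -((2:ℝ) • eps i)}

def BCn (n : ℕ) : Set (E n) := shortBC n ∪ longBC n ∪ divBC n
def Bn (n : ℕ) : Set (E n) := shortBC n ∪ longBC n
def Cn (n : ℕ) : Set (E n) := longBC n ∪ divBC n

/-!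
Let the real root `(±ε i, z)` have degree `[i ∈ J] + [z ∈ Z₂]` and `(±ε p ± ε q, y)` degree
`[p ∈ J] + [q ∈ J]`, modulo `2`. Since `2 Λs ⊆ Λl`, two values in `Λs` whose sum lies in `Λl` lie in
the same coset, so degrees add up whenever the sum of two real roots is a real root. The sets in the
theorem are the even parts of these gradings. They are maximal because any two odd roots are joined
by a chain of odd roots whose consecutive differences are roots, necessarily even: a closed system
that contains the even part and one odd root contains everything.

Conversely, adding a long root never leads out of a semi-closed gradient `Δ`, but `e + f ∉ Δ` for
some short `e, f ∈ Δ`. Take for `J` the indices of the short roots that are linked to `e` by long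
roots of `Δ`, and for `Z₂` the cosets of `Λl` that occur over `J`; then `Ψ` is contained in the
even part, hence equal to it by maximality.
-/

section Reflection

lemma pairing_add_left (u v α : V) : pairing (u + v) α = pairing u α + pairing v α := by
  simp only [pairing, inner_add_left]
  ring

lemma pairing_self {α : V} (hα : α ≠ 0) : pairing α α = 2 := by
  have : ⟪α, α⟫ ≠ 0 := inner_self_ne_zero.2 hα
  simp only [pairing]
  field_simp

lemma reflRoot_add (α u v : V) : reflRoot α (u + v) = reflRoot α u + reflRoot α v := by
  simp only [reflRoot, pairing_add_left]
  module

lemma reflRoot_neg (α v : V) : reflRoot α (-v) = -reflRoot α v := by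
  simp only [reflRoot, pairing, inner_neg_left]
  module

lemma reflRoot_self {α : V} (hα : α ≠ 0) : reflRoot α α = -α := by
  rw [reflRoot, pairing_self hα]
  module

lemma reflRoot_of_inner_eq_zero {α v : V} (h : ⟪v, α⟫ = 0) : reflRoot α v = v := by
  simp [reflRoot, pairing, h]

lemma reflAff_self {x : V × Y} (hx : x.1 ≠ 0) : reflAff x x = -x := by
  refine Prod.ext (reflRoot_self hx) ?_
  simp only [reflAff, pairing_self hx, Prod.snd_neg]
  module

lemma IsSubRS.neg_mem {Φ Δ : Set V} (hΔ : IsSubRS Φ Δ) (hΦ : 0 ∉ Φ) {v : V} (hv : v ∈ Δ) :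
    -v ∈ Δ := by
  rw [← reflRoot_self (ne_of_mem_of_not_mem (hΔ.2.1 hv) hΦ)]
  exact hΔ.2.2 v hv v hv

lemma IsSubSys.neg_mem {R Ψ : Set (V × Y)} (hΨ : IsSubSys R Ψ) (hR : ∀ x ∈ R, x.1 ≠ 0)
    {x : V × Y} (hx : x ∈ Ψ) : -x ∈ Ψ := by
  rw [← reflAff_self (hR x (hΨ.2.1 hx))]
  exact hΨ.2.2.2 x hx x hx

end Reflection

section EvenPart

variable {A : Type*} [AddCommGroup A] {R F P : Set A}

/-- `F` is the even part of a `ℤ/2`-grading of `R` that is additive on those sums which lie in `R`;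
the analogue for root systems of a subgroup of index two. -/
structure IsEvenPart (R F : Set A) : Prop where
  subset : F ⊆ R
  add_mem_iff : ∀ ⦃x⦄, x ∈ R → ∀ ⦃y⦄, y ∈ R → x + y ∈ R → (x + y ∈ F ↔ (x ∈ F ↔ y ∈ F))

/-- Two odd elements of `R` are adjacent if they differ by an element of `R`. -/
def OddAdj (R F : Set A) (u v : A) : Prop := u ∈ R \ F ∧ v ∈ R \ F ∧ v - u ∈ R

lemma OddAdj.stdSymm (hR : ∀ x ∈ R, -x ∈ R) : Std.Symm (OddAdj R F) where
  symm _ _ h := ⟨h.2.1, h.1, by rw [← neg_sub]; exact hR _ h.2.2⟩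

lemma IsEvenPart.sub_mem (hF : IsEvenPart R F) {u v : A} (huv : OddAdj R F u v) : v - u ∈ F := by
  obtain ⟨hu, hv, hvu⟩ := huv
  have h := hF.add_mem_iff hu.1 hvu (by rw [add_sub_cancel]; exact hv.1)
  rw [add_sub_cancel] at h
  exact not_not.1 fun hvu' => hv.2 (h.2 (iff_of_false hu.2 hvu'))

lemma IsEvenPart.eq_of_connected (hF : IsEvenPart R F)
    (hconn : ∀ x ∈ R \ F, ∀ y ∈ R \ F, Relation.ReflTransGen (OddAdj R F) x y)
    (hPR : P ⊆ R) (hFP : F ⊂ P) (hadd : ∀ x ∈ P, ∀ y ∈ P, x + y ∈ R → x + y ∈ P) : P = R := by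
  obtain ⟨x, hxP, hxF⟩ := Set.exists_of_ssubset hFP
  have reach : ∀ y, Relation.ReflTransGen (OddAdj R F) x y → y ∈ P := by
    intro y hxy
    induction hxy with
    | refl => exact hxP
    | @tail u v _ huv hu =>
      have := hadd u hu (v - u) (hFP.1 (hF.sub_mem huv))
      rw [add_sub_cancel] at this
      exact this huv.2.1.1
  refine hPR.antisymm fun y hy => ?_
  by_cases hyF : y ∈ F
  · exact hFP.1 hyF
  · exact reach y (hconn x ⟨hPR hxP, hxF⟩ y ⟨hy, hyF⟩)

end EvenPart

section ShortRoots

variable {n : ℕ} {i j k p q : Fin n} {e f v : E n}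

/-- The pair `{ε i, -ε i}` of short roots; a long root is a sum of members of two different pairs,
which lets arguments about roots avoid explicit signs. -/
def shortAt (i : Fin n) : Set (E n) := {eps i, -eps i}

lemma eps_mem_shortAt (i : Fin n) : eps i ∈ shortAt i := Or.inl rfl

lemma neg_mem_shortAt (he : e ∈ shortAt i) : -e ∈ shortAt i := by
  rcases he with rfl | rfl
  · exact Or.inr rfl
  · exact Or.inl (neg_neg _)

lemma eq_or_eq_neg_of_mem_shortAt (he : e ∈ shortAt i) (hf : f ∈ shortAt i) :
    f = e ∨ f = -e := by
  rcases he with rfl | rfl <;> rcases hf with rfl | rfl <;> simp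

lemma apply_of_mem_shortAt (he : e ∈ shortAt i) (k : Fin n) :
    k ≠ i ∧ e k = 0 ∨ k = i ∧ (e k = 1 ∨ e k = -1) := by
  by_cases hk : k = i
  · subst hk
    rcases he with rfl | rfl <;> simp [eps]
  · rcases he with rfl | rfl <;> simp [eps, hk]

lemma shortAt.apply_ne_zero_iff (he : e ∈ shortAt i) : e k ≠ 0 ↔ k = i := by
  rcases apply_of_mem_shortAt he k with ⟨hk, h⟩ | ⟨hk, h | h⟩ <;> simp [hk, h]

lemma shortAt.apply_eq_zero (he : e ∈ shortAt i) (hk : k ≠ i) : e k = 0 :=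
  not_not.1 (mt (shortAt.apply_ne_zero_iff he).1 hk)

lemma shortAt.eq_neg_of_apply_eq_neg (he : e ∈ shortAt i) (hf : f ∈ shortAt i) (h : f i = -e i) :
    f = -e := by
  rcases eq_or_eq_neg_of_mem_shortAt he hf with rfl | hfe
  · have := (shortAt.apply_ne_zero_iff he).2 rfl
    exact absurd (self_eq_neg.1 h) this
  · exact hfe

lemma shortAt.add_apply_ne_zero_iff (hpq : p ≠ q) (he : e ∈ shortAt p) (hf : f ∈ shortAt q) :
    (e + f) k ≠ 0 ↔ k = p ∨ k = q := by
  rw [PiLp.add_apply]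
  by_cases hkp : k = p
  · rw [shortAt.apply_eq_zero hf (hkp.trans_ne hpq), add_zero, shortAt.apply_ne_zero_iff he]
    simp only [hkp, true_or]
  · rw [shortAt.apply_eq_zero he hkp, zero_add, shortAt.apply_ne_zero_iff hf]
    simp only [hkp, false_or]

lemma inner_of_mem_shortAt (he : e ∈ shortAt i) (v : E n) : ⟪v, e⟫ = v i * e i := by
  rcases he with rfl | rfl <;> simp [eps, EuclideanSpace.inner_single_right]

lemma shortAt.inner_eq_zero (hij : i ≠ j) (he : e ∈ shortAt i) (hf : f ∈ shortAt j) :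
    ⟪e, f⟫ = 0 := by
  rw [inner_of_mem_shortAt hf, shortAt.apply_eq_zero he hij.symm, zero_mul]

lemma shortAt.inner_self (he : e ∈ shortAt i) : ⟪e, e⟫ = 1 := by
  rcases he with rfl | rfl <;> simp [eps]

lemma shortAt.inner_trichotomy (he : e ∈ shortAt i) (hf : f ∈ shortAt j) :
    ⟪e, f⟫ = 0 ∨ ⟪e, f⟫ = 1 ∨ ⟪e, f⟫ = -1 := by
  rcases eq_or_ne i j with rfl | hij
  · rcases eq_or_eq_neg_of_mem_shortAt he hf with rfl | rfl
    · exact Or.inr (Or.inl (shortAt.inner_self hf))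
    · exact Or.inr (Or.inr (by rw [inner_neg_right, shortAt.inner_self he]))
  · exact Or.inl (shortAt.inner_eq_zero hij he hf)

lemma ne_zero_of_mem_shortAt (he : e ∈ shortAt i) : e ≠ 0 :=
  inner_self_ne_zero.1 (by rw [shortAt.inner_self he]; exact one_ne_zero)

lemma mem_shortAt_add_shortAt_iff :
    v ∈ shortAt p + shortAt q ↔
      ∃ c d : ℝ, (c = 1 ∨ c = -1) ∧ (d = 1 ∨ d = -1) ∧ v = c • eps p + d • eps q := by
  constructor
  · rintro ⟨e, he, f, hf, rfl⟩
    rcases he with rfl | rfl <;> rcases hf with rfl | rfl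
    · exact ⟨1, 1, by simp⟩
    · exact ⟨1, -1, by simp⟩
    · exact ⟨-1, 1, by simp⟩
    · exact ⟨-1, -1, by simp⟩
  · rintro ⟨c, d, hc, hd, rfl⟩
    refine Set.add_mem_add ?_ ?_
    · rcases hc with rfl | rfl <;> simp [shortAt]
    · rcases hd with rfl | rfl <;> simp [shortAt]

end ShortRoots

section Roots

variable {n : ℕ} {i j k p q : Fin n} {e f α β v : E n}

lemma mem_shortBC_iff : v ∈ shortBC n ↔ ∃ i, v ∈ shortAt i := Iff.rfl

lemma mem_longBC_iff : v ∈ longBC n ↔ ∃ p q, p ≠ q ∧ v ∈ shortAt p + shortAt q := by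
  simp only [longBC, Set.mem_ofPred_eq, ← mem_shortAt_add_shortAt_iff]

lemma add_mem_longBC (hpq : p ≠ q) (he : e ∈ shortAt p) (hf : f ∈ shortAt q) :
    e + f ∈ longBC n :=
  mem_longBC_iff.2 ⟨p, q, hpq, Set.add_mem_add he hf⟩

lemma apply_of_mem_Bn (hv : v ∈ Bn n) (k : Fin n) : v k = 0 ∨ v k = 1 ∨ v k = -1 := by
  rcases hv with ⟨i, hi⟩ | hv
  · have := apply_of_mem_shortAt hi k
    tauto
  · obtain ⟨p, q, hpq, e, he, f, hf, rfl⟩ := mem_longBC_iff.1 hv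
    rw [PiLp.add_apply]
    rcases eq_or_ne k p with rfl | hkp
    · rw [shortAt.apply_eq_zero hf hpq, add_zero]
      have := apply_of_mem_shortAt he k
      tauto
    · rw [shortAt.apply_eq_zero he hkp, zero_add]
      have := apply_of_mem_shortAt hf k
      tauto

lemma exists_pair_of_mem_Bn (hv : v ∈ Bn n) : ∃ p q, ∀ k, v k ≠ 0 → k = p ∨ k = q := by
  rcases hv with ⟨i, hi⟩ | hv
  · exact ⟨i, i, fun k hk => Or.inl ((shortAt.apply_ne_zero_iff hi).1 hk)⟩
  · obtain ⟨p, q, hpq, e, he, f, hf, rfl⟩ := mem_longBC_iff.1 hv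
    exact ⟨p, q, fun k => (shortAt.add_apply_ne_zero_iff hpq he hf).1⟩

lemma exists_apply_ne_zero (hv : v ∈ Bn n) : ∃ k, v k ≠ 0 := by
  rcases hv with ⟨i, hi⟩ | hv
  · exact ⟨i, (shortAt.apply_ne_zero_iff hi).2 rfl⟩
  · obtain ⟨p, q, hpq, e, he, f, hf, rfl⟩ := mem_longBC_iff.1 hv
    exact ⟨p, (shortAt.add_apply_ne_zero_iff hpq he hf).2 (Or.inl rfl)⟩

lemma zero_notMem_Bn : (0 : E n) ∉ Bn n := fun h => by
  obtain ⟨k, hk⟩ := exists_apply_ne_zero h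
  exact hk rfl

lemma disjoint_shortBC_longBC : Disjoint (shortBC n) (longBC n) := by
  refine Set.disjoint_left.2 ?_
  rintro v ⟨i, hi⟩ hv
  obtain ⟨p, q, hpq, e, he, f, hf, rfl⟩ := mem_longBC_iff.1 hv
  have hp := (shortAt.add_apply_ne_zero_iff hpq he hf).2 (Or.inl rfl)
  have hq := (shortAt.add_apply_ne_zero_iff hpq he hf).2 (Or.inr rfl)
  rw [shortAt.apply_ne_zero_iff hi] at hp hq
  exact hpq (hp.trans hq.symm)

lemma ne_of_add_mem_Bn (he : e ∈ shortAt i) (hf : f ∈ shortAt j) (h : e + f ∈ Bn n) : i ≠ j := by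
  rintro rfl
  rcases eq_or_eq_neg_of_mem_shortAt he hf with rfl | rfl
  · have h₂ := apply_of_mem_Bn h i
    rw [PiLp.add_apply] at h₂
    rcases apply_of_mem_shortAt hf i with ⟨hi, -⟩ | ⟨-, hi | hi⟩
    · exact hi rfl
    all_goals norm_num [hi] at h₂
  · rw [add_neg_cancel] at h
    exact zero_notMem_Bn h

lemma exists_short_add_short (hβ : β ∈ longBC n) (hk : β k ≠ 0) :
    ∃ r, k ≠ r ∧ ∃ e ∈ shortAt k, ∃ f ∈ shortAt r, β = e + f := by
  obtain ⟨p, q, hpq, e, he, f, hf, rfl⟩ := mem_longBC_iff.1 hβ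
  rcases (shortAt.add_apply_ne_zero_iff hpq he hf).1 hk with rfl | rfl
  · exact ⟨q, hpq, e, he, f, hf, rfl⟩
  · exact ⟨p, hpq.symm, f, hf, e, he, add_comm e f⟩

lemma exists_opposite_apply (hα : α ∈ Bn n) (hβ : β ∈ longBC n) (h : α + β ∈ Bn n) :
    ∃ k, α k ≠ 0 ∧ β k = -α k := by
  obtain ⟨p, q, hpq, e, he, f, hf, rfl⟩ := mem_longBC_iff.1 hβ
  have hsupp : ∀ k, (e + f) k ≠ 0 ↔ k = p ∨ k = q := fun k =>
    shortAt.add_apply_ne_zero_iff hpq he hf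
  have hcommon : ∃ k, α k ≠ 0 ∧ (e + f) k ≠ 0 := by
    -- Otherwise the support of `α + β` would contain the three indices `a`, `p` and `q`.
    by_contra! hcon
    obtain ⟨a, ha⟩ := exists_apply_ne_zero hα
    obtain ⟨r, s, hrs⟩ := exists_pair_of_mem_Bn h
    have hr : ∀ k, α k ≠ 0 ∨ (e + f) k ≠ 0 → k = r ∨ k = s := by
      intro k hk
      refine hrs k ?_
      rw [PiLp.add_apply]
      by_cases hαk : α k = 0
      · simpa [hαk] using hk
      · simpa [hcon k hαk] using hαk
    have hap : ¬(a = p ∨ a = q) := fun h' => (hsupp a).2 h' (hcon a ha)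
    have := hr a (Or.inl ha)
    have := hr p (Or.inr ((hsupp p).2 (Or.inl rfl)))
    have := hr q (Or.inr ((hsupp q).2 (Or.inr rfl)))
    grind
  obtain ⟨k, hαk, hβk⟩ := hcommon
  have cancel : ∀ a b : ℝ, a ≠ 0 → b ≠ 0 → (a = 0 ∨ a = 1 ∨ a = -1) → (b = 0 ∨ b = 1 ∨ b = -1) →
      (a + b = 0 ∨ a + b = 1 ∨ a + b = -1) → b = -a := by grind
  exact ⟨k, hαk, cancel _ _ hαk hβk (apply_of_mem_Bn hα k) (apply_of_mem_Bn (Or.inr hβ) k)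
    (apply_of_mem_Bn h k)⟩

lemma exists_eq_neg_add_of_short_add_long (he : e ∈ shortAt i) (hβ : β ∈ longBC n)
    (h : e + β ∈ Bn n) : ∃ j, i ≠ j ∧ ∃ f ∈ shortAt j, β = -e + f := by
  obtain ⟨k, hek, hβk⟩ := exists_opposite_apply (Or.inl ⟨i, he⟩) hβ h
  obtain rfl := (shortAt.apply_ne_zero_iff he).1 hek
  obtain ⟨j, hkj, g, hg, f, hf, rfl⟩ :=
    exists_short_add_short hβ (k := k) (by rw [hβk]; exact neg_ne_zero.2 hek)
  rw [PiLp.add_apply, shortAt.apply_eq_zero hf hkj, add_zero] at hβk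
  exact ⟨j, hkj, f, hf, by rw [shortAt.eq_neg_of_apply_eq_neg he hg hβk]⟩

lemma exists_eq_add_of_long_add_long (hα : α ∈ longBC n) (hβ : β ∈ longBC n)
    (h : α + β ∈ Bn n) :
    ∃ k p q, k ≠ p ∧ k ≠ q ∧ p ≠ q ∧
      ∃ e ∈ shortAt k, ∃ f ∈ shortAt p, ∃ g ∈ shortAt q, α = e + f ∧ β = -e + g := by
  obtain ⟨k, hαk, hβk⟩ := exists_opposite_apply (Or.inr hα) hβ h
  obtain ⟨p, hkp, e, he, f, hf, rfl⟩ := exists_short_add_short hα hαk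
  obtain ⟨q, hkq, e', he', g, hg, rfl⟩ :=
    exists_short_add_short hβ (k := k) (by rw [hβk]; exact neg_ne_zero.2 hαk)
  rw [PiLp.add_apply, PiLp.add_apply, shortAt.apply_eq_zero hf hkp, shortAt.apply_eq_zero hg hkq,
    add_zero, add_zero] at hβk
  obtain rfl := shortAt.eq_neg_of_apply_eq_neg he he' hβk
  have hfg : e + f + (-e + g) = f + g := by abel
  rw [hfg] at h
  exact ⟨k, p, q, hkp, hkq, ne_of_add_mem_Bn hf hg h, e, he, f, hf, g, hg, rfl, rfl⟩

end Roots

section RootReflections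

variable {n : ℕ} {i k p q : Fin n} {e f g : E n}

lemma pairing_short (he : e ∈ shortAt i) (v : E n) : pairing v e = 2 * ⟪v, e⟫ := by
  rw [pairing, shortAt.inner_self he, div_one]

lemma pairing_long (hpq : p ≠ q) (he : e ∈ shortAt p) (hf : f ∈ shortAt q) (v : E n) :
    pairing v (e + f) = ⟪v, e⟫ + ⟪v, f⟫ := by
  have hnorm : ⟪e + f, e + f⟫ = 2 := by
    rw [inner_add_left, inner_add_right, inner_add_right, shortAt.inner_self he,
      shortAt.inner_self hf, shortAt.inner_eq_zero hpq he hf, shortAt.inner_eq_zero hpq.symm hf he]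
    norm_num
  rw [pairing, hnorm, inner_add_right]
  ring

lemma reflRoot_short_mem (he : e ∈ shortAt i) (hg : g ∈ shortAt k) :
    reflRoot e g ∈ shortAt k := by
  by_cases hik : k = i
  · subst hik
    have hself := neg_mem_shortAt he
    rw [← reflRoot_self (ne_zero_of_mem_shortAt he)] at hself
    rcases eq_or_eq_neg_of_mem_shortAt he hg with rfl | rfl
    · exact hself
    · rw [reflRoot_neg]
      exact neg_mem_shortAt hself
  · rwa [reflRoot_of_inner_eq_zero (shortAt.inner_eq_zero hik hg he)]

lemma reflRoot_long_left (hpq : p ≠ q) (he : e ∈ shortAt p) (hf : f ∈ shortAt q) :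
    reflRoot (e + f) e = -f := by
  rw [reflRoot, pairing_long hpq he hf, shortAt.inner_self he, shortAt.inner_eq_zero hpq he hf]
  module

lemma reflRoot_long_mem (hpq : p ≠ q) (he : e ∈ shortAt p) (hf : f ∈ shortAt q)
    (hg : g ∈ shortAt k) : reflRoot (e + f) g ∈ shortAt (Equiv.swap p q k) := by
  have move : ∀ {p q : Fin n} {e f g : E n}, p ≠ q → e ∈ shortAt p → f ∈ shortAt q →
      g ∈ shortAt p → reflRoot (e + f) g ∈ shortAt q := by
    intro p q e f g hpq he hf hg
    rcases eq_or_eq_neg_of_mem_shortAt he hg with rfl | rfl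
    · rw [reflRoot_long_left hpq he hf]
      exact neg_mem_shortAt hf
    · rwa [reflRoot_neg, reflRoot_long_left hpq he hf, neg_neg]
  rcases eq_or_ne k p with rfl | hkp
  · rw [Equiv.swap_apply_left]
    exact move hpq he hf hg
  rcases eq_or_ne k q with rfl | hkq
  · rw [Equiv.swap_apply_right, add_comm]
    exact move hpq.symm hf he hg
  rwa [Equiv.swap_apply_of_ne_of_ne hkp hkq, reflRoot_of_inner_eq_zero]
  rw [inner_add_right, shortAt.inner_eq_zero hkp hg he, shortAt.inner_eq_zero hkq hg hf, add_zero]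

lemma reflRoot_short_add (hpq : p ≠ q) (he : e ∈ shortAt p) (hf : f ∈ shortAt q) :
    reflRoot e (e + f) = -e + f := by
  rw [reflRoot_add, reflRoot_self (ne_zero_of_mem_shortAt he),
    reflRoot_of_inner_eq_zero (shortAt.inner_eq_zero hpq.symm hf he)]

end RootReflections

section RealRoots

variable {n : ℕ} {Y : Type*} [AddCommGroup Y] {Λs : Set Y} {L : AddSubgroup Y}
  {i p q : Fin n} {e f : E n} {x : E n × Y} {y z w : Y}

/-- What the first axiom of an extension datum of type `B_n` says about its common values `Λs` on
short roots and `L` on long roots, when `L` is a subgroup. -/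
structure IsShortLongPair (Λs : Set Y) (L : AddSubgroup Y) : Prop where
  add_mem : ∀ ⦃z⦄, z ∈ Λs → ∀ ⦃h⦄, h ∈ L → z + h ∈ Λs
  add_self_mem : ∀ ⦃z⦄, z ∈ Λs → z + z ∈ L

lemma IsShortLongPair.sub_mem (hΛ : IsShortLongPair Λs L) (hz : z ∈ Λs) (hy : y ∈ L) :
    y - z ∈ Λs := by
  have : y - z = z + (y - (z + z)) := by abel
  rw [this]
  exact hΛ.add_mem hz (L.sub_mem hy (hΛ.add_self_mem hz))

lemma IsShortLongPair.neg_mem (hΛ : IsShortLongPair Λs L) (hz : z ∈ Λs) : -z ∈ Λs := by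
  rw [← zero_sub]
  exact hΛ.sub_mem hz L.zero_mem

lemma IsShortLongPair.sub_mem_iff (hΛ : IsShortLongPair Λs L) (hw : w ∈ Λs) :
    z - w ∈ L ↔ z + w ∈ L := by
  have : z + w = z - w + (w + w) := by abel
  rw [this, L.add_mem_cancel_right (hΛ.add_self_mem hw)]

/-- The real roots of type `B_n` with values `Λs` on short and `L` on long roots. -/
def realRoots (n : ℕ) (Λs : Set Y) (L : AddSubgroup Y) : Set (E n × Y) :=
  {x | x.1 ∈ shortBC n ∧ x.2 ∈ Λs ∨ x.1 ∈ longBC n ∧ x.2 ∈ L}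

lemma phiRe_eq_realRoots {Λ : E n → Set Y} (hs : ∀ α ∈ shortBC n, Λ α = Λs)
    (hl : ∀ α ∈ longBC n, Λ α = (L : Set Y)) : PhiRe (Bn n) Λ = realRoots n Λs L := by
  ext x
  constructor
  · rintro ⟨hx | hx, hx'⟩
    · exact Or.inl ⟨hx, by rwa [hs _ hx] at hx'⟩
    · exact Or.inr ⟨hx, by rwa [hl _ hx] at hx'⟩
  · rintro (⟨hx, hx'⟩ | ⟨hx, hx'⟩)
    · exact ⟨Or.inl hx, by rwa [hs _ hx]⟩
    · exact ⟨Or.inr hx, by rwa [hl _ hx]⟩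

lemma realRoots.fst_mem_Bn (hx : x ∈ realRoots n Λs L) : x.1 ∈ Bn n :=
  hx.imp And.left And.left

lemma realRoots.fst_ne_zero (hx : x ∈ realRoots n Λs L) : x.1 ≠ 0 :=
  ne_of_mem_of_not_mem (realRoots.fst_mem_Bn hx) zero_notMem_Bn

lemma short_mem_realRoots (he : e ∈ shortAt i) : (e, z) ∈ realRoots n Λs L ↔ z ∈ Λs := by
  have hs : e ∈ shortBC n := mem_shortBC_iff.2 ⟨i, he⟩
  simp only [realRoots, Set.mem_ofPred_eq, hs, disjoint_shortBC_longBC.notMem_of_mem_left hs,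
    true_and, false_and, or_false]

lemma long_mem_realRoots (hpq : p ≠ q) (he : e ∈ shortAt p) (hf : f ∈ shortAt q) :
    (e + f, y) ∈ realRoots n Λs L ↔ y ∈ L := by
  have hl : e + f ∈ longBC n := add_mem_longBC hpq he hf
  simp only [realRoots, Set.mem_ofPred_eq, hl, disjoint_shortBC_longBC.notMem_of_mem_right hl,
    true_and, false_and, false_or]

lemma exists_of_mem_realRoots (hx : x ∈ realRoots n Λs L) :
    (∃ i, ∃ e ∈ shortAt i, ∃ z ∈ Λs, x = (e, z)) ∨
      ∃ p q, p ≠ q ∧ ∃ e ∈ shortAt p, ∃ f ∈ shortAt q, ∃ y ∈ L, x = (e + f, y) := by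
  obtain ⟨v, y⟩ := x
  rcases hx with ⟨⟨i, hi⟩, hy⟩ | ⟨hv, hy⟩
  · exact Or.inl ⟨i, v, hi, y, hy, rfl⟩
  · obtain ⟨p, q, hpq, e, he, f, hf, rfl⟩ := mem_longBC_iff.1 hv
    exact Or.inr ⟨p, q, hpq, e, he, f, hf, y, hy, rfl⟩

lemma neg_mem_realRoots (hΛ : IsShortLongPair Λs L) (hx : x ∈ realRoots n Λs L) :
    -x ∈ realRoots n Λs L := by
  rcases exists_of_mem_realRoots hx with
    ⟨i, e, he, z, hz, rfl⟩ | ⟨p, q, hpq, e, he, f, hf, y, hy, rfl⟩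
  · exact (short_mem_realRoots (neg_mem_shortAt he)).2 (hΛ.neg_mem hz)
  · rw [Prod.neg_mk, neg_add]
    exact (long_mem_realRoots hpq (neg_mem_shortAt he) (neg_mem_shortAt hf)).2 (L.neg_mem hy)

lemma isShortLongPair_of_isExtensionDatum [Module ℝ Y] (hn : 2 ≤ n) {Λ : E n → Set Y}
    (hΛ : IsExtensionDatum (Bn n) Λ) (hs : ∀ α ∈ shortBC n, Λ α = Λs)
    (hl : ∀ α ∈ longBC n, Λ α = (L : Set Y)) : IsShortLongPair Λs L := by
  obtain ⟨i, j, hij⟩ : ∃ i j : Fin n, i ≠ j :=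
    ⟨⟨0, by omega⟩, ⟨1, by omega⟩, by simp⟩
  have hi := eps_mem_shortAt i
  have hj := eps_mem_shortAt j
  have short : ∀ {k : Fin n} {v : E n}, v ∈ shortAt k → Λ v = Λs := fun h => hs _ ⟨_, h⟩
  have refl_mem := hΛ.1
  have hlong : eps i + eps j ∈ longBC n := add_mem_longBC hij hi hj
  refine ⟨fun z hz h hh => ?_, fun z hz => ?_⟩
  · have := refl_mem (eps i + eps j) (Or.inr hlong) (eps i) (Or.inl ⟨i, hi⟩) (-h)
      (by rw [hl _ hlong]; exact L.neg_mem hh) z (by rwa [short hi])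
    rw [reflRoot_long_left hij hi hj, short (neg_mem_shortAt hj), pairing_long hij hi hj,
      shortAt.inner_self hi, shortAt.inner_eq_zero hij hi hj] at this
    simpa using this
  · have := refl_mem (eps i) (Or.inl ⟨i, hi⟩) (eps i + eps j) (Or.inr hlong) z
      (by rwa [short hi]) 0 (by rw [hl _ hlong]; exact L.zero_mem)
    rw [reflRoot_short_add hij hi hj, hl _ (add_mem_longBC hij (neg_mem_shortAt hi) hj),
      pairing_short hi, inner_add_left, shortAt.inner_self hi,
      shortAt.inner_eq_zero hij.symm hj hi] at this
    simpa [two_smul] using L.neg_mem this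

end RealRoots

section EvenRealRoots

variable {n : ℕ} {Y : Type*} [AddCommGroup Y] {J : Set (Fin n)} {Λs Z : Set Y} {L : AddSubgroup Y}
  {i j p q r : Fin n} {e f g : E n} {x : E n × Y} {y z w : Y}

/-- The real roots `(±ε i, z)` with `i ∈ J ↔ z ∈ Z` and `(±ε p ± ε q, y)` with `p ∈ J ↔ q ∈ J`.
With `Z₁ = Λs \ Z` and `Z₂ = Z` this is the set in the classification. -/
def evenPart (J : Set (Fin n)) (Λs Z : Set Y) (L : AddSubgroup Y) : Set (E n × Y) :=
  {x | (∃ i, x.1 ∈ shortAt i ∧ x.2 ∈ Λs ∧ (i ∈ J ↔ x.2 ∈ Z)) ∨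
    ∃ p q, p ≠ q ∧ (p ∈ J ↔ q ∈ J) ∧ x.1 ∈ shortAt p + shortAt q ∧ x.2 ∈ L}

lemma short_mem_evenPart (he : e ∈ shortAt i) :
    (e, z) ∈ evenPart J Λs Z L ↔ z ∈ Λs ∧ (i ∈ J ↔ z ∈ Z) := by
  refine ⟨?_, fun h => Or.inl ⟨i, he, h⟩⟩
  rintro (⟨k, hk, h⟩ | ⟨p, q, hpq, -, hpq', -⟩)
  · obtain rfl : i = k := (shortAt.apply_ne_zero_iff hk).1 ((shortAt.apply_ne_zero_iff he).2 rfl)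
    exact h
  · exact absurd (mem_longBC_iff.2 ⟨p, q, hpq, hpq'⟩)
      (disjoint_shortBC_longBC.notMem_of_mem_left ⟨i, he⟩)

lemma long_mem_evenPart (hpq : p ≠ q) (he : e ∈ shortAt p) (hf : f ∈ shortAt q) :
    (e + f, y) ∈ evenPart J Λs Z L ↔ y ∈ L ∧ (p ∈ J ↔ q ∈ J) := by
  refine ⟨?_, fun h => Or.inr ⟨p, q, hpq, h.2, Set.add_mem_add he hf, h.1⟩⟩
  rintro (⟨k, hk, -⟩ | ⟨p', q', hpq', hJ, ⟨e', he', f', hf', heq⟩, hy⟩)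
  · exact absurd (add_mem_longBC hpq he hf) (disjoint_shortBC_longBC.notMem_of_mem_left ⟨k, hk⟩)
  · have support : ∀ k, (k = p ∨ k = q) ↔ (k = p' ∨ k = q') := fun k => by
      rw [← shortAt.add_apply_ne_zero_iff hpq he hf, ← shortAt.add_apply_ne_zero_iff hpq' he' hf',
        show e' + f' = e + f from heq]
    refine ⟨hy, ?_⟩
    rcases (support p).1 (Or.inl rfl) with rfl | rfl <;>
      rcases (support q).1 (Or.inr rfl) with rfl | rfl <;> tauto

lemma evenPart_union_eq {Z₁ Z₂ : Set Y} (hZ : Disjoint Z₁ Z₂) :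
    evenPart J (Z₁ ∪ Z₂) Z₂ L =
      {x | (∃ i, i ∉ J ∧ (x.1 = eps i ∨ x.1 = -eps i)) ∧ x.2 ∈ Z₁} ∪
      {x | (∃ j, j ∈ J ∧ (x.1 = eps j ∨ x.1 = -eps j)) ∧ x.2 ∈ Z₂} ∪
      {x | (∃ p q, p ≠ q ∧ ((p ∈ J ∧ q ∈ J) ∨ (p ∉ J ∧ q ∉ J)) ∧
        ∃ c d : ℝ, (c = 1 ∨ c = -1) ∧ (d = 1 ∨ d = -1) ∧
          x.1 = c • eps p + d • eps q) ∧ x.2 ∈ L} := by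
  ext x
  have hdisj : x.2 ∈ Z₁ → x.2 ∉ Z₂ := fun h => hZ.notMem_of_mem_left h
  simp only [← mem_shortAt_add_shortAt_iff, ← iff_iff_and_or_not_and_not]
  constructor
  · rintro (⟨i, hi, h₁ | h₂, hJ⟩ | ⟨p, q, hpq, hJ, hx, hy⟩)
    · exact Or.inl (Or.inl ⟨⟨i, fun h => hdisj h₁ (hJ.1 h), hi⟩, h₁⟩)
    · exact Or.inl (Or.inr ⟨⟨i, hJ.2 h₂, hi⟩, h₂⟩)
    · exact Or.inr ⟨⟨p, q, hpq, hJ, hx⟩, hy⟩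
  · rintro ((⟨⟨i, hJ, hi⟩, h₁⟩ | ⟨⟨i, hJ, hi⟩, h₂⟩) | ⟨⟨p, q, hpq, hJ, hx⟩, hy⟩)
    · exact Or.inl ⟨i, hi, Or.inl h₁, iff_of_false hJ (hdisj h₁)⟩
    · exact Or.inl ⟨i, hi, Or.inr h₂, iff_of_true hJ h₂⟩
    · exact Or.inr ⟨p, q, hpq, hJ, hx, hy⟩

lemma evenPart_subset : evenPart J Λs Z L ⊆ realRoots n Λs L := by
  rintro x (⟨i, hi, hx, -⟩ | ⟨p, q, hpq, -, hx, hy⟩)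
  · exact Or.inl ⟨⟨i, hi⟩, hx⟩
  · exact Or.inr ⟨mem_longBC_iff.2 ⟨p, q, hpq, hx⟩, hy⟩

/-- The data of the classification: a proper nonempty set of indices and a partition of `Λs` into
two nonempty unions of cosets of `L`, of which only the second part, `Z`, is recorded. -/
structure IsSplitting (J : Set (Fin n)) (Λs Z : Set Y) (L : AddSubgroup Y) : Prop where
  exists_mem : ∃ j, j ∈ J
  exists_notMem : ∃ j, j ∉ J
  nonempty : Z.Nonempty
  diff_nonempty : (Λs \ Z).Nonempty
  subset : Z ⊆ Λs
  add_mem : ∀ ⦃z⦄, z ∈ Z → ∀ ⦃h⦄, h ∈ L → z + h ∈ Z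

lemma IsSplitting.mem_iff (hS : IsSplitting J Λs Z L) (h : z - w ∈ L) : z ∈ Z ↔ w ∈ Z := by
  constructor
  · intro hz
    simpa using hS.add_mem hz (L.neg_mem h)
  · intro hw
    simpa using hS.add_mem hw h

lemma short_add_short_mem_evenPart (hΛ : IsShortLongPair Λs L) (hS : IsSplitting J Λs Z L)
    (he : e ∈ shortAt i) (hf : f ∈ shortAt j) (hz : z ∈ Λs) (hw : w ∈ Λs)
    (h : (e + f, z + w) ∈ realRoots n Λs L) :
    (e + f, z + w) ∈ evenPart J Λs Z L ↔
      ((e, z) ∈ evenPart J Λs Z L ↔ (f, w) ∈ evenPart J Λs Z L) := by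
  have hij : i ≠ j := ne_of_add_mem_Bn he hf (realRoots.fst_mem_Bn h)
  have hzw : z + w ∈ L := (long_mem_realRoots hij he hf).1 h
  have hZ : z ∈ Z ↔ w ∈ Z := hS.mem_iff ((hΛ.sub_mem_iff hw).2 hzw)
  rw [long_mem_evenPart hij he hf, short_mem_evenPart he, short_mem_evenPart hf]
  tauto

lemma short_add_long_mem_evenPart (hΛ : IsShortLongPair Λs L) (hS : IsSplitting J Λs Z L)
    (he : e ∈ shortAt i) (hpq : p ≠ q) (hf : f ∈ shortAt p) (hg : g ∈ shortAt q) (hz : z ∈ Λs)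
    (hy : y ∈ L) (h : (e + (f + g), z + y) ∈ realRoots n Λs L) :
    (e + (f + g), z + y) ∈ evenPart J Λs Z L ↔
      ((e, z) ∈ evenPart J Λs Z L ↔ (f + g, y) ∈ evenPart J Λs Z L) := by
  obtain ⟨r, hir, f', hf', heq⟩ :=
    exists_eq_neg_add_of_short_add_long he (add_mem_longBC hpq hf hg) (realRoots.fst_mem_Bn h)
  have hzy : z + y ∈ Λs := hΛ.add_mem hz hy
  have hZ : z + y ∈ Z ↔ z ∈ Z := hS.mem_iff (by rwa [add_sub_cancel_left])
  rw [heq, add_neg_cancel_left, short_mem_evenPart hf', short_mem_evenPart he,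
    long_mem_evenPart hir (neg_mem_shortAt he) hf']
  tauto

lemma long_add_long_mem_evenPart {α β : E n} (hα : α ∈ longBC n) (hβ : β ∈ longBC n)
    (hy : y ∈ L) (hz : z ∈ L) (h : (α + β, y + z) ∈ realRoots n Λs L) :
    (α + β, y + z) ∈ evenPart J Λs Z L ↔
      ((α, y) ∈ evenPart J Λs Z L ↔ (β, z) ∈ evenPart J Λs Z L) := by
  obtain ⟨k, p, q, hkp, hkq, hpq, e, he, f, hf, g, hg, rfl, rfl⟩ :=
    exists_eq_add_of_long_add_long hα hβ (realRoots.fst_mem_Bn h)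
  have hfg : e + f + (-e + g) = f + g := by abel
  have hyz : y + z ∈ L := L.add_mem hy hz
  rw [hfg, long_mem_evenPart hpq hf hg, long_mem_evenPart hkp he hf,
    long_mem_evenPart hkq (neg_mem_shortAt he) hg]
  tauto

lemma isEvenPart_evenPart (hΛ : IsShortLongPair Λs L) (hS : IsSplitting J Λs Z L) :
    IsEvenPart (realRoots n Λs L) (evenPart J Λs Z L) where
  subset := evenPart_subset
  add_mem_iff x hx y hy hxy := by
    rcases exists_of_mem_realRoots hx with
      ⟨i, e, he, z, hz, rfl⟩ | ⟨p, q, hpq, e, he, f, hf, z, hz, rfl⟩ <;>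
    rcases exists_of_mem_realRoots hy with
      ⟨j, g, hg, w, hw, rfl⟩ | ⟨r, s, hrs, g, hg, h, hh, w, hw, rfl⟩
    · exact short_add_short_mem_evenPart hΛ hS he hg hz hw hxy
    · exact short_add_long_mem_evenPart hΛ hS he hrs hg hh hz hw hxy
    · rw [add_comm] at hxy ⊢
      rw [iff_comm (a := _ ∈ _) (b := (g, w) ∈ _)]
      exact short_add_long_mem_evenPart hΛ hS hg hpq he hf hw hz hxy
    · exact long_add_long_mem_evenPart (add_mem_longBC hpq he hf) (add_mem_longBC hrs hg hh)
        hz hw hxy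

lemma IsSplitting.exists_odd_value (hS : IsSplitting J Λs Z L) (i : Fin n) :
    ∃ z ∈ Λs, ¬(i ∈ J ↔ z ∈ Z) := by
  by_cases hi : i ∈ J
  · obtain ⟨z, hz, hzZ⟩ := hS.diff_nonempty
    exact ⟨z, hz, fun h => hzZ (h.1 hi)⟩
  · obtain ⟨z, hz⟩ := hS.nonempty
    exact ⟨z, hS.subset hz, fun h => hi (h.2 hz)⟩

lemma short_mem_odd (he : e ∈ shortAt i) :
    (e, z) ∈ realRoots n Λs L \ evenPart J Λs Z L ↔ z ∈ Λs ∧ ¬(i ∈ J ↔ z ∈ Z) := by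
  rw [Set.mem_sdiff, short_mem_realRoots he, short_mem_evenPart he]
  tauto

lemma long_mem_odd (hpq : p ≠ q) (he : e ∈ shortAt p) (hf : f ∈ shortAt q) :
    (e + f, y) ∈ realRoots n Λs L \ evenPart J Λs Z L ↔ y ∈ L ∧ ¬(p ∈ J ↔ q ∈ J) := by
  rw [Set.mem_sdiff, long_mem_realRoots hpq he hf, long_mem_evenPart hpq he hf]
  tauto

lemma exists_of_mem_odd (hx : x ∈ realRoots n Λs L \ evenPart J Λs Z L) :
    (∃ i, ∃ e ∈ shortAt i, ∃ z, x = (e, z)) ∨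
      ∃ p ∈ J, ∃ q ∉ J, ∃ e ∈ shortAt p, ∃ f ∈ shortAt q, ∃ y ∈ L, x = (e + f, y) := by
  rcases exists_of_mem_realRoots hx.1 with
    ⟨i, e, he, z, -, rfl⟩ | ⟨p, q, hpq, e, he, f, hf, y, hy, rfl⟩
  · exact Or.inl ⟨i, e, he, z, rfl⟩
  · have hodd := ((long_mem_odd hpq he hf).1 hx).2
    by_cases hp : p ∈ J
    · exact Or.inr ⟨p, hp, q, fun hq => hodd (iff_of_true hp hq), e, he, f, hf, y, hy, rfl⟩
    · have hq : q ∈ J := not_not.1 fun hq => hodd (iff_of_false hp hq)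
      exact Or.inr ⟨q, hq, p, hp, f, hf, e, he, y, hy, by rw [add_comm]⟩

lemma oddAdj_short_long (hΛ : IsShortLongPair Λs L) (hpq : ¬(p ∈ J ↔ q ∈ J))
    (he : e ∈ shortAt p) (hf : f ∈ shortAt q) (hy : y ∈ L)
    (hez : (e, z) ∈ realRoots n Λs L \ evenPart J Λs Z L) :
    OddAdj (realRoots n Λs L) (evenPart J Λs Z L) (e, z) (e + f, y) := by
  have hne : p ≠ q := fun h => hpq (by rw [h])
  refine ⟨hez, (long_mem_odd hne he hf).2 ⟨hy, hpq⟩, ?_⟩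
  rw [Prod.mk_sub_mk, add_sub_cancel_left, short_mem_realRoots hf]
  exact hΛ.sub_mem ((short_mem_odd he).1 hez).1 hy

lemma reflTransGen_oddAdj_short_long (hΛ : IsShortLongPair Λs L) (hS : IsSplitting J Λs Z L)
    (hg : g ∈ shortAt r) (hgw : (g, w) ∈ realRoots n Λs L \ evenPart J Λs Z L)
    (hp : p ∈ J) (hq : q ∉ J) (he : e ∈ shortAt p) (hf : f ∈ shortAt q) (hy : y ∈ L) :
    Relation.ReflTransGen (OddAdj (realRoots n Λs L) (evenPart J Λs Z L)) (g, w) (e + f, y) := by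
  have hsymm := OddAdj.stdSymm (F := evenPart J Λs Z L) fun x hx => neg_mem_realRoots (n := n) hΛ hx
  have path : ∀ {p q : Fin n} {e f : E n}, e ∈ shortAt p → f ∈ shortAt q → ¬(r ∈ J ↔ q ∈ J) →
      ¬(p ∈ J ↔ q ∈ J) → Relation.ReflTransGen (OddAdj (realRoots n Λs L) (evenPart J Λs Z L))
        (g, w) (e + f, y) := by
    intro p q e f he hf hrq hpq
    obtain ⟨z, hz, hzodd⟩ := hS.exists_odd_value q
    have hfz := (short_mem_odd (L := L) hf).2 ⟨hz, hzodd⟩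
    have h₁ := oddAdj_short_long hΛ hrq hg hf L.zero_mem hgw
    have h₂ := oddAdj_short_long hΛ (mt Iff.symm hrq) hf hg L.zero_mem hfz
    have h₃ := oddAdj_short_long hΛ (mt Iff.symm hpq) hf he hy hfz
    rw [add_comm f g] at h₂
    rw [add_comm f e] at h₃
    exact ((Relation.ReflTransGen.single h₁).tail (hsymm.symm _ _ h₂)).tail h₃
  by_cases hr : r ∈ J
  · exact path he hf (fun h => hq (h.1 hr)) fun h => hq (h.1 hp)
  · rw [add_comm]
    exact path hf he (fun h => hr (h.2 hp)) fun h => hq (h.2 hp)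

lemma reflTransGen_oddAdj (hΛ : IsShortLongPair Λs L) (hS : IsSplitting J Λs Z L)
    {u v : E n × Y} (hu : u ∈ realRoots n Λs L \ evenPart J Λs Z L)
    (hv : v ∈ realRoots n Λs L \ evenPart J Λs Z L) :
    Relation.ReflTransGen (OddAdj (realRoots n Λs L) (evenPart J Λs Z L)) u v := by
  have := OddAdj.stdSymm (F := evenPart J Λs Z L) fun x hx => neg_mem_realRoots (n := n) hΛ hx
  rcases exists_of_mem_odd hu with ⟨i, e, he, z, rfl⟩ | ⟨p, hp, q, hq, e, he, f, hf, y, hy, rfl⟩ <;>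
  rcases exists_of_mem_odd hv with ⟨j, g, hg, w, rfl⟩ | ⟨r, hr, s, hs, g, hg, h, hh, w, hw, rfl⟩
  · obtain ⟨p, hp⟩ := hS.exists_mem
    obtain ⟨q, hq⟩ := hS.exists_notMem
    have path := fun {r} {g : E n} {w} (hg : g ∈ shortAt r) hgw =>
      reflTransGen_oddAdj_short_long (w := w) hΛ hS hg hgw hp hq (eps_mem_shortAt p)
        (eps_mem_shortAt q) L.zero_mem
    exact (path he hu).trans (symm (path hg hv))
  · exact reflTransGen_oddAdj_short_long hΛ hS he hu hr hs hg hh hw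
  · exact symm (reflTransGen_oddAdj_short_long hΛ hS hg hv hp hq he hf hy)
  · obtain ⟨z, hz⟩ := hS.exists_odd_value p
    have hez := (short_mem_odd (L := L) he).2 hz
    exact (symm (reflTransGen_oddAdj_short_long hΛ hS he hez hp hq he hf hy)).trans
      (reflTransGen_oddAdj_short_long hΛ hS he hez hr hs hg hh hw)

end EvenRealRoots

section Maximality

variable {n : ℕ} {Y : Type*} [AddCommGroup Y] {J : Set (Fin n)} {Λs Z : Set Y}
  {L : AddSubgroup Y} {k : Fin n} {g : E n} {a x : E n × Y}

lemma exists_perm_reflRoot_mem (ha : a ∈ evenPart J Λs Z L) :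
    ∃ σ : Equiv.Perm (Fin n), (∀ k, σ k ∈ J ↔ k ∈ J) ∧
      ∀ k, ∀ g ∈ shortAt k, reflRoot a.1 g ∈ shortAt (σ k) := by
  rcases ha with ⟨i, hi, -⟩ | ⟨p, q, hpq, hJ, ⟨e, he, f, hf, heq⟩, -⟩
  · exact ⟨1, fun k => Iff.rfl, fun k g hg => reflRoot_short_mem hi hg⟩
  · refine ⟨Equiv.swap p q, fun k => ?_, fun k g hg => ?_⟩
    · rw [Equiv.swap_apply_def]
      split_ifs with hp hq
      · rw [hp, hJ]
      · rw [hq, hJ]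
      · rfl
    · rw [← heq]
      exact reflRoot_long_mem hpq he hf hg

variable [Module ℝ Y]

lemma pairing_smul_mem (hΛ : IsShortLongPair Λs L) (ha : a ∈ realRoots n Λs L)
    (hg : g ∈ shortAt k) : pairing g a.1 • a.2 ∈ L := by
  have inner_smul : ∀ {i} {e : E n} {h : Y}, e ∈ shortAt i → h ∈ L → ⟪g, e⟫ • h ∈ L := by
    intro i e h he hh
    rcases shortAt.inner_trichotomy hg he with hc | hc | hc <;> rw [hc]
    · rw [zero_smul]
      exact L.zero_mem
    · rwa [one_smul]
    · rw [neg_one_smul]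
      exact L.neg_mem hh
  rcases exists_of_mem_realRoots ha with
    ⟨i, e, he, z, hz, rfl⟩ | ⟨p, q, hpq, e, he, f, hf, h, hh, rfl⟩
  · rw [pairing_short he, mul_comm, mul_smul, two_smul]
    exact inner_smul he (hΛ.add_self_mem hz)
  · rw [pairing_long hpq he hf, add_smul]
    exact L.add_mem (inner_smul he hh) (inner_smul hf hh)

lemma reflAff_mem_evenPart (hΛ : IsShortLongPair Λs L) (hS : IsSplitting J Λs Z L)
    (ha : a ∈ evenPart J Λs Z L) (hx : x ∈ evenPart J Λs Z L) :
    reflAff a x ∈ evenPart J Λs Z L := by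
  obtain ⟨σ, hσ, hmem⟩ := exists_perm_reflRoot_mem ha
  have hpair : ∀ {k g}, g ∈ shortAt k → pairing g a.1 • a.2 ∈ L :=
    pairing_smul_mem hΛ (evenPart_subset ha)
  rcases exists_of_mem_realRoots (evenPart_subset hx) with
    ⟨i, e, he, z, hz, rfl⟩ | ⟨p, q, hpq, e, he, f, hf, y, hy, rfl⟩
  · have hL := L.neg_mem (hpair he)
    have hz' : z - pairing e a.1 • a.2 ∈ Λs := by
      rw [sub_eq_add_neg]
      exact hΛ.add_mem hz hL
    have hZ : z - pairing e a.1 • a.2 ∈ Z ↔ z ∈ Z := hS.mem_iff (by rwa [sub_sub_cancel_left])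
    refine (short_mem_evenPart (hmem i e he)).2 ⟨hz', ?_⟩
    rw [hZ, hσ]
    exact ((short_mem_evenPart he).1 hx).2
  · obtain ⟨-, hJ⟩ := (long_mem_evenPart hpq he hf).1 hx
    rw [reflAff, reflRoot_add, pairing_add_left, add_smul]
    refine (long_mem_evenPart (σ.injective.ne hpq) (hmem p e he) (hmem q f hf)).2 ⟨?_, ?_⟩
    · exact L.sub_mem hy (L.add_mem (hpair he) (hpair hf))
    · rwa [hσ, hσ]

lemma isClosedSubSys_evenPart (hΛ : IsShortLongPair Λs L) (hS : IsSplitting J Λs Z L) :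
    IsClosedSubSys (realRoots n Λs L) (evenPart J Λs Z L) := by
  obtain ⟨j, hj⟩ := hS.exists_mem
  obtain ⟨z, hz⟩ := hS.nonempty
  obtain ⟨w, hw⟩ := hS.exists_odd_value j
  refine ⟨⟨⟨(eps j, z), ?_⟩, evenPart_subset, fun heq => ?_, ?_⟩, fun x hx y hy hxy => ?_⟩
  · exact (short_mem_evenPart (eps_mem_shortAt j)).2 ⟨hS.subset hz, iff_of_true hj hz⟩
  · have hodd := (short_mem_odd (L := L) (eps_mem_shortAt j)).2 hw
    rw [heq, Set.sdiff_self] at hodd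
    exact hodd
  · exact fun a ha x hx => reflAff_mem_evenPart hΛ hS ha hx
  · exact ((isEvenPart_evenPart hΛ hS).add_mem_iff (evenPart_subset hx) (evenPart_subset hy)
      hxy).2 (iff_of_true hx hy)

theorem isMaxClosedSubSys_evenPart (hΛ : IsShortLongPair Λs L) (hS : IsSplitting J Λs Z L) :
    IsMaxClosedSubSys (realRoots n Λs L) (evenPart J Λs Z L) := by
  refine ⟨isClosedSubSys_evenPart hΛ hS, fun Ψ hΨ hsub => ?_⟩
  by_contra hne
  exact hΨ.1.2.2.1 ((isEvenPart_evenPart hΛ hS).eq_of_connected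
    (fun u hu v hv => reflTransGen_oddAdj hΛ hS hu hv) hΨ.1.2.1
    (hsub.ssubset_of_ne (Ne.symm hne)) hΨ.2)

end Maximality

section SemiClosedGradient

variable {n : ℕ} {Y : Type*} [AddCommGroup Y] {J : Set (Fin n)} {Λs Z : Set Y}
  {L : AddSubgroup Y} {i : Fin n} {e : E n} {x y : E n × Y}

lemma add_mem_realRoots_of_long (hΛ : IsShortLongPair Λs L) (hx : x ∈ realRoots n Λs L)
    (hy : y ∈ realRoots n Λs L) (hlong : y.1 ∈ longBC n) (h : x.1 + y.1 ∈ Bn n) :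
    x + y ∈ realRoots n Λs L := by
  obtain ⟨β, w⟩ := y
  have hw : w ∈ L := (hy.resolve_left fun hs =>
    disjoint_shortBC_longBC.notMem_of_mem_right hlong hs.1).2
  rcases exists_of_mem_realRoots hx with
    ⟨i, e, he, z, hz, rfl⟩ | ⟨p, q, hpq, e, he, f, hf, z, hz, rfl⟩
  · obtain ⟨j, -, g, hg, rfl⟩ := exists_eq_neg_add_of_short_add_long he hlong h
    rw [Prod.mk_add_mk, add_neg_cancel_left]
    exact (short_mem_realRoots hg).2 (hΛ.add_mem hz hw)
  · obtain ⟨k, r, s, -, -, hrs, e', -, f', hf', g, hg, heq, rfl⟩ :=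
      exists_eq_add_of_long_add_long (add_mem_longBC hpq he hf) hlong h
    have hsum : e' + f' + (-e' + g) = f' + g := by abel
    rw [Prod.mk_add_mk, heq, hsum]
    exact (long_mem_realRoots hrs hf' hg).2 (L.add_mem hz hw)

lemma short_mem_gr_evenPart (hS : IsSplitting J Λs Z L) (he : e ∈ shortAt i) :
    e ∈ Gr (evenPart J Λs Z L) := by
  obtain ⟨z, hz, hZ⟩ : ∃ z ∈ Λs, (i ∈ J ↔ z ∈ Z) := by
    by_cases hi : i ∈ J
    · obtain ⟨z, hz⟩ := hS.nonempty
      exact ⟨z, hS.subset hz, iff_of_true hi hz⟩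
    · obtain ⟨z, hz, hzZ⟩ := hS.diff_nonempty
      exact ⟨z, hz, iff_of_false hi hzZ⟩
  exact ⟨z, (short_mem_evenPart he).2 ⟨hz, hZ⟩⟩

lemma not_closed_gr_evenPart (hS : IsSplitting J Λs Z L) :
    ¬∀ α ∈ Gr (evenPart J Λs Z L), ∀ β ∈ Gr (evenPart J Λs Z L), α + β ∈ Bn n →
      α + β ∈ Gr (evenPart J Λs Z L) := fun hclosed => by
  obtain ⟨i, hi⟩ := hS.exists_mem
  obtain ⟨j, hj⟩ := hS.exists_notMem
  have hij : i ≠ j := ne_of_mem_of_not_mem hi hj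
  have hei := eps_mem_shortAt i
  have hej := eps_mem_shortAt j
  obtain ⟨y, hy⟩ := hclosed _ (short_mem_gr_evenPart hS hei) _ (short_mem_gr_evenPart hS hej)
    (Or.inr (add_mem_longBC hij hei hej))
  exact hj (((long_mem_evenPart hij hei hej).1 hy).2.1 hi)

theorem isSemiClosedSubRS_gr_evenPart [Module ℝ Y] (hΛ : IsShortLongPair Λs L)
    (hS : IsSplitting J Λs Z L) :
    IsSemiClosedSubRS (Bn n) (shortBC n) (longBC n) ∅ (Gr (evenPart J Λs Z L)) := by
  have hF := isClosedSubSys_evenPart hΛ hS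
  have add_long : ∀ {α β}, α ∈ Gr (evenPart J Λs Z L) → β ∈ Gr (evenPart J Λs Z L) →
      β ∈ longBC n → α + β ∈ Bn n → α + β ∈ Gr (evenPart J Λs Z L) := by
    rintro α β ⟨y, hy⟩ ⟨z, hz⟩ hβ h
    exact ⟨y + z, hF.2 _ hy _ hz (add_mem_realRoots_of_long hΛ (evenPart_subset hy)
      (evenPart_subset hz) hβ h)⟩
  have hBn : Gr (evenPart J Λs Z L) ⊆ Bn n := fun α ⟨y, hy⟩ =>
    realRoots.fst_mem_Bn (evenPart_subset hy)
  obtain ⟨i, -⟩ := hS.exists_mem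
  refine ⟨⟨⟨_, short_mem_gr_evenPart hS (eps_mem_shortAt i)⟩, hBn, ?_⟩,
    not_closed_gr_evenPart hS, fun α hα β hβ h hnot => Or.inl ?_⟩
  · rintro α ⟨y, hy⟩ β ⟨z, hz⟩
    exact ⟨_, hF.1.2.2.2 _ hy _ hz⟩
  · have hβs : β ∈ shortBC n := (hBn hβ).resolve_right fun hl => hnot (add_long hα hβ hl h)
    have hαs : α ∈ shortBC n := (hBn hα).resolve_right fun hl =>
      hnot (by rw [add_comm] at h ⊢; exact add_long hβ hα hl h)
    obtain ⟨i, hi⟩ := hαs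
    obtain ⟨j, hj⟩ := hβs
    exact ⟨⟨i, hi⟩, ⟨j, hj⟩, Or.inl (add_mem_longBC (ne_of_add_mem_Bn hi hj h) hi hj)⟩

end SemiClosedGradient

section LinkedIndices

variable {n : ℕ} {Δ : Set (E n)} {a b p q : Fin n} {e f h k α β : E n}

lemma IsSemiClosedSubRS.add_mem_of_long
    (hΔ : IsSemiClosedSubRS (Bn n) (shortBC n) (longBC n) ∅ Δ) (hα : α ∈ Δ) (hβ : β ∈ Δ)
    (hlong : β ∈ longBC n) (h : α + β ∈ Bn n) : α + β ∈ Δ := by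
  by_contra hnot
  rcases hΔ.2.2 α hα β hβ h hnot with ⟨-, hshort, -⟩ | ⟨-, -, hempty⟩
  · exact disjoint_shortBC_longBC.notMem_of_mem_left hshort hlong
  · exact hempty

lemma IsSemiClosedSubRS.exists_short_add_notMem
    (hΔ : IsSemiClosedSubRS (Bn n) (shortBC n) (longBC n) ∅ Δ) :
    ∃ a b, a ≠ b ∧ ∃ e ∈ shortAt a, ∃ f ∈ shortAt b, e ∈ Δ ∧ f ∈ Δ ∧ e + f ∉ Δ := by
  have hnotclosed := hΔ.2.1
  push Not at hnotclosed
  obtain ⟨e, heΔ, f, hfΔ, hBn, hnot⟩ := hnotclosed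
  rcases hΔ.2.2 e heΔ f hfΔ hBn hnot with ⟨⟨a, he⟩, ⟨b, hf⟩, -⟩ | ⟨-, -, hempty⟩
  · exact ⟨a, b, ne_of_add_mem_Bn he hf hBn, e, he, f, hf, heΔ, hfΔ, hnot⟩
  · exact hempty.elim

lemma IsSubRS.neg_add_mem (hΔ : IsSubRS (Bn n) Δ) (hpq : p ≠ q) (he : e ∈ shortAt p)
    (hf : f ∈ shortAt q) (heΔ : e ∈ Δ) (h : e + f ∈ Δ) : -e + f ∈ Δ := by
  rw [← reflRoot_short_add hpq he hf]
  exact hΔ.2.2 e heΔ _ h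

/-- The indices of those short roots in `Δ` that are equal to `e` or differ from it by a (long) root
in `Δ`. For the gradient `Δ` of a maximal closed subroot system this is the set `J`. -/
def linkedIndices (Δ : Set (E n)) (e : E n) : Set (Fin n) :=
  {j | ∃ g ∈ shortAt j, g ∈ Δ ∧ (g = e ∨ -e + g ∈ Δ)}

lemma mem_linkedIndices_self (he : e ∈ shortAt a) (heΔ : e ∈ Δ) : a ∈ linkedIndices Δ e :=
  ⟨e, he, heΔ, Or.inl rfl⟩

lemma notMem_linkedIndices (hΔ : IsSubRS (Bn n) Δ) (hab : a ≠ b) (he : e ∈ shortAt a)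
    (hf : f ∈ shortAt b) (heΔ : e ∈ Δ) (hnot : e + f ∉ Δ) : b ∉ linkedIndices Δ e := by
  have hneg : ∀ {v}, v ∈ Δ → -v ∈ Δ := hΔ.neg_mem zero_notMem_Bn
  rintro ⟨g, hg, -, rfl | hge⟩
  · exact hab ((shortAt.apply_ne_zero_iff hg).1 ((shortAt.apply_ne_zero_iff he).2 rfl))
  · rcases eq_or_eq_neg_of_mem_shortAt hf hg with rfl | rfl
    · have := hΔ.neg_add_mem hab (neg_mem_shortAt he) hg (hneg heΔ) hge
      rw [neg_neg] at this
      exact hnot this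
    · have := hneg hge
      rw [neg_add, neg_neg, neg_neg] at this
      exact hnot this

lemma mem_linkedIndices_of_add_mem (hΔ : IsSemiClosedSubRS (Bn n) (shortBC n) (longBC n) ∅ Δ)
    (he : e ∈ shortAt a) (heΔ : e ∈ Δ) (hpq : p ≠ q) (hh : h ∈ shortAt p) (hk : k ∈ shortAt q)
    (hhk : h + k ∈ Δ) (hp : p ∈ linkedIndices Δ e) : q ∈ linkedIndices Δ e := by
  obtain ⟨g, hg, hgΔ, hge⟩ := hp
  have hgk : -g + k ∈ Δ := by
    rcases eq_or_eq_neg_of_mem_shortAt hg hh with rfl | rfl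
    · exact hΔ.1.neg_add_mem hpq hh hk hgΔ hhk
    · exact hhk
  have hgk_long : -g + k ∈ longBC n := add_mem_longBC hpq (neg_mem_shortAt hg) hk
  have hkΔ : k ∈ Δ := by
    have := hΔ.add_mem_of_long hgΔ hgk hgk_long
    rw [add_neg_cancel_left] at this
    exact this (Or.inl ⟨q, hk⟩)
  rcases hge with rfl | hge
  · exact ⟨k, hk, hkΔ, Or.inr hgk⟩
  · rcases eq_or_ne a q with rfl | haq
    · exact mem_linkedIndices_self he heΔ
    · have hek := hΔ.add_mem_of_long hge hgk hgk_long
      have hsum : -e + g + (-g + k) = -e + k := by abel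
      rw [hsum] at hek
      exact ⟨k, hk, hkΔ, Or.inr (hek (Or.inr (add_mem_longBC haq (neg_mem_shortAt he) hk)))⟩

end LinkedIndices

section Splitting

variable {n : ℕ} {Y : Type*} [AddCommGroup Y] {J : Set (Fin n)} {Λs Z Z₁ Z₂ : Set Y}
  {L : AddSubgroup Y} {Ψ : Set (E n × Y)} {y z : Y}

/-- The union of those cosets of `L` that meet `{z | (±ε j, z) ∈ Ψ}` for some `j ∈ J`. -/
def valueCosets (Ψ : Set (E n × Y)) (J : Set (Fin n)) (L : AddSubgroup Y) : Set Y :=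
  {y | ∃ j ∈ J, ∃ g ∈ shortAt j, ∃ z, (g, z) ∈ Ψ ∧ y - z ∈ L}

lemma valueCosets_subset (hΛ : IsShortLongPair Λs L) (hΨ : Ψ ⊆ realRoots n Λs L) :
    valueCosets Ψ J L ⊆ Λs := by
  rintro y ⟨j, -, g, hg, z, hgz, hyz⟩
  simpa using hΛ.add_mem ((short_mem_realRoots hg).1 (hΨ hgz)) hyz

lemma add_mem_valueCosets (hy : y ∈ valueCosets Ψ J L) (hz : z ∈ L) :
    y + z ∈ valueCosets Ψ J L := by
  obtain ⟨j, hj, g, hg, w, hgw, hyw⟩ := hy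
  refine ⟨j, hj, g, hg, w, hgw, ?_⟩
  rw [add_sub_right_comm]
  exact L.add_mem hyw hz

lemma subset_evenPart_valueCosets [Module ℝ Y] (hΨ : IsClosedSubSys (realRoots n Λs L) Ψ)
    (hJ : ∀ {p q} {h k : E n}, p ≠ q → h ∈ shortAt p → k ∈ shortAt q → h + k ∈ Gr Ψ →
      p ∈ J → q ∈ J) : Ψ ⊆ evenPart J Λs (valueCosets Ψ J L) L := by
  intro x hx
  rcases exists_of_mem_realRoots (hΨ.1.2.1 hx) with
    ⟨i, h, hh, y, hy, rfl⟩ | ⟨p, q, hpq, h, hh, k, hk, y, hy, rfl⟩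
  · refine (short_mem_evenPart hh).2 ⟨hy, fun hi => ⟨i, hi, h, hh, y, hx, ?_⟩, ?_⟩
    · rw [sub_self]
      exact L.zero_mem
    · rintro ⟨j, hj, g, hg, z, hgz, hyz⟩
      by_cases hij : j = i
      · exact hij ▸ hj
      · have hneg : (-g, -z) ∈ Ψ := hΨ.1.neg_mem (fun _ => realRoots.fst_ne_zero) hgz
        have hroot : (-g + h, -z + y) ∈ realRoots n Λs L :=
          (long_mem_realRoots hij (neg_mem_shortAt hg) hh).2 (by rwa [neg_add_eq_sub])
        exact hJ hij (neg_mem_shortAt hg) hh ⟨_, hΨ.2 _ hneg _ hx hroot⟩ hj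
  · have hqp : k + h ∈ Gr Ψ := ⟨y, by rwa [add_comm]⟩
    exact (long_mem_evenPart hpq hh hk).2 ⟨hy, hJ hpq hh hk ⟨y, hx⟩, hJ hpq.symm hk hh hqp⟩

theorem exists_splitting_subset_evenPart [Module ℝ Y] (hΛ : IsShortLongPair Λs L)
    (hΨ : IsClosedSubSys (realRoots n Λs L) Ψ)
    (hGr : IsSemiClosedSubRS (Bn n) (shortBC n) (longBC n) ∅ (Gr Ψ)) :
    ∃ J Z, IsSplitting J Λs Z L ∧ Ψ ⊆ evenPart J Λs Z L := by
  obtain ⟨a, b, hab, e, he, f, hf, heΔ, hfΔ, hef⟩ := hGr.exists_short_add_notMem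
  set J := linkedIndices (Gr Ψ) e
  have haJ : a ∈ J := mem_linkedIndices_self he heΔ
  have hbJ : b ∉ J := notMem_linkedIndices hGr.1 hab he hf heΔ hef
  have hsub : Ψ ⊆ evenPart J Λs (valueCosets Ψ J L) L :=
    subset_evenPart_valueCosets hΨ (mem_linkedIndices_of_add_mem hGr he heΔ)
  obtain ⟨z, hz⟩ := heΔ
  obtain ⟨w, hw⟩ := hfΔ
  obtain ⟨-, hzZ⟩ := (short_mem_evenPart he).1 (hsub hz)
  obtain ⟨hwΛ, hwZ⟩ := (short_mem_evenPart hf).1 (hsub hw)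
  exact ⟨J, valueCosets Ψ J L,
    { exists_mem := ⟨a, haJ⟩
      exists_notMem := ⟨b, hbJ⟩
      nonempty := ⟨z, hzZ.1 haJ⟩
      diff_nonempty := ⟨w, hwΛ, mt hwZ.2 hbJ⟩
      subset := valueCosets_subset hΛ hΨ.1.2.1
      add_mem := fun _ hy _ hh => add_mem_valueCosets hy hh }, hsub⟩

lemma IsSplitting.add_mem_diff (hΛ : IsShortLongPair Λs L) (hS : IsSplitting J Λs Z L)
    (hz : z ∈ Λs \ Z) (hy : y ∈ L) : z + y ∈ Λs \ Z :=
  ⟨hΛ.add_mem hz.1 hy, fun h => hz.2 ((hS.mem_iff (by rwa [add_sub_cancel_left])).1 h)⟩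

lemma isSplitting_union (hJ : J ≠ ∅) (hJ' : J ≠ Set.univ) (hZ₁ : Z₁.Nonempty) (hZ₂ : Z₂.Nonempty)
    (hdisj : Disjoint Z₁ Z₂) (hadd : ∀ z ∈ Z₂, ∀ h ∈ L, z + h ∈ Z₂) :
    IsSplitting J (Z₁ ∪ Z₂) Z₂ L where
  exists_mem := Set.nonempty_iff_ne_empty.2 hJ
  exists_notMem := (Set.ne_univ_iff_exists_notMem J).1 hJ'
  nonempty := hZ₂
  diff_nonempty := by rwa [Set.union_sdiff_right, hdisj.sdiff_eq_left]
  subset := Set.subset_union_right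
  add_mem z hz h hh := hadd z hz h hh

end Splitting

theorem statement12_general {Y : Type*} [AddCommGroup Y] [Module ℝ Y] {n : ℕ} {Λs : Set Y}
    {Λl : AddSubgroup Y} (hΛ : IsShortLongPair Λs Λl) (Ψ : Set (E n × Y)) :
    (IsMaxClosedSubSys (realRoots n Λs Λl) Ψ ∧
        IsSemiClosedSubRS (Bn n) (shortBC n) (longBC n) ∅ (Gr Ψ)) ↔
      ∃ (J : Set (Fin n)) (Z₁ Z₂ : Set Y),
        J ≠ ∅ ∧ J ≠ Set.univ ∧ Z₁.Nonempty ∧ Z₂.Nonempty ∧ Disjoint Z₁ Z₂ ∧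
        (∀ z ∈ Z₁, ∀ h ∈ Λl, z + h ∈ Z₁) ∧ (∀ z ∈ Z₂, ∀ h ∈ Λl, z + h ∈ Z₂) ∧
        Λs = Z₁ ∪ Z₂ ∧
        Ψ = {x | (∃ i, i ∉ J ∧ (x.1 = eps i ∨ x.1 = -eps i)) ∧ x.2 ∈ Z₁} ∪
            {x | (∃ j, j ∈ J ∧ (x.1 = eps j ∨ x.1 = -eps j)) ∧ x.2 ∈ Z₂} ∪
            {x | (∃ p q, p ≠ q ∧ ((p ∈ J ∧ q ∈ J) ∨ (p ∉ J ∧ q ∉ J)) ∧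
              ∃ c d : ℝ, (c = 1 ∨ c = -1) ∧ (d = 1 ∨ d = -1) ∧
                x.1 = c • eps p + d • eps q) ∧ x.2 ∈ Λl} := by
  constructor
  · rintro ⟨hmax, hGr⟩
    obtain ⟨J, Z, hS, hsub⟩ := exists_splitting_subset_evenPart hΛ hmax.1 hGr
    have hunion : Λs = Λs \ Z ∪ Z := (Set.sdiff_union_of_subset hS.subset).symm
    have hdisj : Disjoint (Λs \ Z) Z := Set.disjoint_sdiff_left
    refine ⟨J, Λs \ Z, Z, Set.Nonempty.ne_empty hS.exists_mem,
      (Set.ne_univ_iff_exists_notMem J).2 hS.exists_notMem, hS.diff_nonempty, hS.nonempty, hdisj,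
      fun z hz h hh => hS.add_mem_diff hΛ hz hh, fun z hz h hh => hS.add_mem hz hh, hunion, ?_⟩
    rw [← evenPart_union_eq hdisj, ← hunion]
    exact (hmax.2 _ (isClosedSubSys_evenPart hΛ hS) hsub).symm
  · rintro ⟨J, Z₁, Z₂, hJ, hJ', hZ₁, hZ₂, hdisj, -, hadd, rfl, rfl⟩
    have hS : IsSplitting J (Z₁ ∪ Z₂) Z₂ Λl := isSplitting_union hJ hJ' hZ₁ hZ₂ hdisj hadd
    rw [← evenPart_union_eq hdisj]
    exact ⟨isMaxClosedSubSys_evenPart hΛ hS, isSemiClosedSubRS_gr_evenPart hΛ hS⟩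

/-- Theorem 4.3 (type `B_n`): maximal closed subroot systems with semi-closed
gradient. -/
theorem statement12 {Y : Type*} [AddCommGroup Y] [Module ℝ Y] [FiniteDimensional ℝ Y]
    {n : ℕ} (hn : 2 ≤ n) (Λ : E n → Set Y) (Λs : Set Y) (Λl : AddSubgroup Y)
    (hED : IsExtensionDatum (Bn n) Λ)
    (hs : ∀ α ∈ shortBC n, Λ α = Λs) (hl : ∀ α ∈ longBC n, Λ α = (Λl : Set Y))
    (hls : (Λl : Set Y) ⊆ Λs)
    (Ψ : Set (E n × Y)) :
    (IsMaxClosedSubSys (PhiRe (Bn n) Λ) Ψ ∧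
        IsSemiClosedSubRS (Bn n) (shortBC n) (longBC n) ∅ (Gr Ψ)) ↔
      ∃ (J : Set (Fin n)) (Z₁ Z₂ : Set Y),
        J ≠ ∅ ∧ J ≠ Set.univ ∧ Z₁.Nonempty ∧ Z₂.Nonempty ∧ Disjoint Z₁ Z₂ ∧
        (∀ z ∈ Z₁, ∀ h ∈ Λl, z + h ∈ Z₁) ∧ (∀ z ∈ Z₂, ∀ h ∈ Λl, z + h ∈ Z₂) ∧
        Λs = Z₁ ∪ Z₂ ∧
        Ψ = {x | (∃ i, i ∉ J ∧ (x.1 = eps i ∨ x.1 = -eps i)) ∧ x.2 ∈ Z₁} ∪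
            {x | (∃ j, j ∈ J ∧ (x.1 = eps j ∨ x.1 = -eps j)) ∧ x.2 ∈ Z₂} ∪
            {x | (∃ p q, p ≠ q ∧ ((p ∈ J ∧ q ∈ J) ∨ (p ∉ J ∧ q ∉ J)) ∧
              ∃ c d : ℝ, (c = 1 ∨ c = -1) ∧ (d = 1 ∨ d = -1) ∧
                x.1 = c • eps p + d • eps q) ∧ x.2 ∈ Λl} := by
  rw [phiRe_eq_realRoots hs hl]
  exact statement12_general (isShortLongPair_of_isExtensionDatum hn hED hs hl) Ψ

end BdS

end
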